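/- arXiv:1702.02095 — 4 statements merged into one kernel-verified Lean document; each statement's English description precedes it below -/
import Mathlib

section
/- Let n > 4 and 2 ≤ k < n/2 with n odd, and suppose the binomial coefficient C(n,k) is even. Then the Kneser graph K(n,k) is not a Cayley graph; that is, no subgroup of the automorphism group of K(n,k) acts regularly (i.e., freely and transitively) on the vertex set of K(n,k). -/
/-- The Kneser graph `K(n,k)`: vertices are the `k`-element subsets of `Fin n`,
with two vertices adjacent iff the corresponding subsets are disjoint. -/
def kneserGraph (n k : ℕ) : SimpleGraph {s : Finset (Fin n) // s.card = k} :=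
  SimpleGraph.fromRel (fun v w => Disjoint v.val w.val)

/-- A graph is a Cayley graph iff some subgroup of its automorphism group acts
regularly (freely and transitively) on the vertex set. -/
def IsCayleyGraph {V : Type*} (G : SimpleGraph V) : Prop :=
  ∃ H : Subgroup (G ≃g G), ∀ v w : V, ∃! g : H, (g : G ≃g G) v = w

/-!
A Cayley graph on an even number of vertices has a fixed-point-free automorphism of order two, by
Cauchy's theorem. For `0 < k` and `2 * k < n` every automorphism of `K(n,k)` is induced by a
permutation of `Fin n`, here an involution `σ`. Unions of orbits and of pairs of fixed points of `σ`
are `σ`-invariant sets of every even size; as `n` is odd, their complements have every odd size.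
So `σ` stabilises some `k`-set, which is a fixed vertex.

To see that automorphisms are induced by permutations, count the `k`-sets inside a set: an
automorphism extends to the `(k+1)`-sets, compatibly with inclusion. A compatible pair of
permutations of two consecutive layers then extends to the layer below, sending `S` to
the intersection of the images of any two sets covering it, a choice that the upper layer shows to
be immaterial; descending to singletons yields the permutation.
-/

theorem choose_left_strictMonoOn {k : ℕ} (hk : k ≠ 0) :
    StrictMonoOn (fun n : ℕ ↦ n.choose k) (Set.Ici k) := by
  obtain ⟨k, rfl⟩ := Nat.exists_eq_succ_of_ne_zero hk
  intro a ha b _ hab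
  have hpos : 0 < a.choose k := Nat.choose_pos (Nat.le_of_succ_le ha)
  calc a.choose (k + 1) < a.choose k + a.choose (k + 1) := Nat.lt_add_of_pos_left hpos
    _ = (a + 1).choose (k + 1) := (Nat.choose_succ_succ' a k).symm
    _ ≤ b.choose (k + 1) := Nat.choose_le_choose _ hab

section InclusionCompatible

open Finset hiding powersetCard
open Set (powersetCard)
open Set.powersetCard (card_eq eq_iff_subset mem_iff)
open Equiv (Perm)
open scoped Pointwise

variable {α : Type*} {j k m : ℕ}

theorem subset_of_forall_powersetCard_subset {U W : Finset α} (hk : k ≠ 0) (hU : k ≤ #U)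
    (h : ∀ A : powersetCard α k, (A : Finset α) ⊆ U → (A : Finset α) ⊆ W) : U ⊆ W := by
  intro x hx
  obtain ⟨A, hxA, hAU, hA⟩ := exists_subsuperset_card_eq (singleton_subset_iff.2 hx)
    (by rw [card_singleton]; exact Nat.one_le_iff_ne_zero.2 hk) hU
  exact h ⟨A, hA⟩ hAU (singleton_subset_iff.1 hxA)

theorem card_powersetCard_subset (k : ℕ) (U : Finset α) :
    Nat.card {A : powersetCard α k // (A : Finset α) ⊆ U} = (#U).choose k := by
  let e : {A : powersetCard α k // (A : Finset α) ⊆ U} ≃ Finset.powersetCard k U :=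
    (Equiv.subtypeSubtypeEquivSubtypeInter (· ∈ powersetCard α k) (· ⊆ U)).trans <|
      Equiv.subtypeEquivRight fun _ ↦ by
        rw [Finset.mem_powersetCard, mem_iff, and_comm]
  rw [Nat.card_congr e, Nat.card_eq_fintype_card, Fintype.card_coe, card_powersetCard]

theorem card_eq_of_forall_subset_iff_subset (f : Perm (powersetCard α k)) {U W : Finset α}
    (hk : k ≠ 0) (hU : k ≤ #U)
    (h : ∀ A, (f A : Finset α) ⊆ W ↔ (A : Finset α) ⊆ U) : #W = #U := by
  have hchoose : (#W).choose k = (#U).choose k := by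
    rw [← card_powersetCard_subset, ← card_powersetCard_subset]
    exact (Nat.card_congr (f.subtypeEquiv fun A ↦ (h A).symm)).symm
  have hW : k ≤ #W := by
    by_contra! hlt
    rw [Nat.choose_eq_zero_of_lt hlt] at hchoose
    exact (Nat.choose_pos hU).ne hchoose
  exact (choose_left_strictMonoOn hk).injOn hW hU hchoose

/-- Permutations `f` of the `j`-subsets and `g` of the `k`-subsets of `α` are compatible if together
they form an automorphism of the bipartite inclusion graph between these two layers. Automorphisms
of Kneser graphs are determined by moving compatible pairs between layers. -/
def InclusionCompatible (f : Perm (powersetCard α j)) (g : Perm (powersetCard α k)) : Prop :=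
  ∀ A U, (f A : Finset α) ⊆ g U ↔ (A : Finset α) ⊆ U

theorem InclusionCompatible.symm {f : Perm (powersetCard α j)} {g : Perm (powersetCard α k)}
    (h : InclusionCompatible f g) : InclusionCompatible f.symm g.symm := fun A U ↦ by
  rw [← h, f.apply_symm_apply, g.apply_symm_apply]

theorem exists_inclusionCompatible_of_forall_exists [Finite α] (f : Perm (powersetCard α k))
    (hk : k ≠ 0) (hkm : k ≤ m)
    (h : ∀ U : powersetCard α m,
      ∃ W : Finset α, ∀ A, (f A : Finset α) ⊆ W ↔ (A : Finset α) ⊆ U) :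
    ∃ g : Perm (powersetCard α m), InclusionCompatible f g := by
  have hle (U : powersetCard α m) : k ≤ #(U : Finset α) := by rwa [card_eq U]
  choose W hW using h
  let g (U : powersetCard α m) : powersetCard α m :=
    ⟨W U, (card_eq_of_forall_subset_iff_subset f hk (hle U) (hW U)).trans (card_eq U)⟩
  have hinj : Function.Injective g := fun U V hUV ↦
    eq_iff_subset.2 <| subset_of_forall_powersetCard_subset hk (hle U) fun A hA ↦
      (hW V A).1 <| ((hW U A).2 hA).trans (Subtype.ext_iff.1 hUV).subset
  exact ⟨.ofBijective g (Finite.injective_iff_bijective.1 hinj), fun A U ↦ hW U A⟩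

-- The image of `U` is the set of points avoiding `f B` for every `B` disjoint from `U`.
theorem exists_inclusionCompatible_of_disjoint_iff [Fintype α] (f : Perm (powersetCard α k))
    (hf : ∀ A B, Disjoint (f A : Finset α) (f B) ↔ Disjoint (A : Finset α) B)
    (hk : k ≠ 0) (hkm : k ≤ m) (hm : m + k ≤ Fintype.card α) :
    ∃ g : Perm (powersetCard α m), InclusionCompatible f g := by
  classical
  refine exists_inclusionCompatible_of_forall_exists f hk hkm fun U ↦ ?_
  let W : Finset α := {x | ∀ B : powersetCard α k, Disjoint (U : Finset α) B → x ∉ (f B : Finset α)}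
  have hUc : k ≤ #(U : Finset α)ᶜ := by rw [card_compl, card_eq U]; omega
  refine ⟨W, fun A ↦ ?_⟩
  calc (f A : Finset α) ⊆ W
      ↔ ∀ B : powersetCard α k, Disjoint (U : Finset α) B → Disjoint (f A : Finset α) (f B) := by
        simp only [W, subset_iff, mem_filter_univ, disjoint_left]
        tauto
    _ ↔ ∀ B : powersetCard α k,
          (B : Finset α) ⊆ (U : Finset α)ᶜ → (B : Finset α) ⊆ (A : Finset α)ᶜ := by
        simp only [hf, subset_compl_iff_disjoint_left]
    _ ↔ (U : Finset α)ᶜ ⊆ (A : Finset α)ᶜ :=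
        ⟨subset_of_forall_powersetCard_subset hk hUc, fun h _ hB ↦ hB.trans h⟩
    _ ↔ (A : Finset α) ⊆ U := compl_subset_compl

theorem card_inter_lt_of_ne [DecidableEq α] {A B : powersetCard α k} (hAB : A ≠ B) :
    #(A ∩ B : Finset α) < k := by
  have hssub : (A ∩ B : Finset α) ⊂ A :=
    inter_subset_left.ssubset_of_ne fun h ↦ hAB (eq_iff_subset.2 (inter_eq_left.1 h))
  exact (card_lt_card hssub).trans_eq (card_eq A)

theorem inter_eq_of_ne [DecidableEq α] {S : powersetCard α j} {A B : powersetCard α (j + 1)}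
    (hAB : A ≠ B) (hA : (S : Finset α) ⊆ A) (hB : (S : Finset α) ⊆ B) : (A ∩ B : Finset α) = S := by
  have hlt := card_inter_lt_of_ne hAB
  exact (eq_of_subset_of_card_le (subset_inter hA hB) (by rw [card_eq S]; omega)).symm

theorem card_union_of_ne [DecidableEq α] {S : powersetCard α j} {A B : powersetCard α (j + 1)}
    (hAB : A ≠ B) (hA : (S : Finset α) ⊆ A) (hB : (S : Finset α) ⊆ B) :
    #(A ∪ B : Finset α) = j + 2 := by
  have h := card_union_add_card_inter (A : Finset α) B
  rw [inter_eq_of_ne hAB hA hB, card_eq A, card_eq B, card_eq S] at h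
  omega

theorem card_inter_of_ne [DecidableEq α] {A B : powersetCard α (j + 1)}
    {U : powersetCard α (j + 2)} (hAB : A ≠ B) (hA : (A : Finset α) ⊆ U) (hB : (B : Finset α) ⊆ U) :
    #(A ∩ B : Finset α) = j := by
  have hlt := card_inter_lt_of_ne hAB
  have hle := card_le_card (union_subset hA hB)
  have h := card_union_add_card_inter (A : Finset α) B
  rw [card_eq U] at hle
  rw [card_eq A, card_eq B] at h
  omega

theorem not_subset_union_of_ne [DecidableEq α] {S : powersetCard α j}
    {A B C : powersetCard α (j + 1)} (hAC : A ≠ C) (hBC : B ≠ C)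
    (hA : (S : Finset α) ⊆ A) (hB : (S : Finset α) ⊆ B) (hC : (S : Finset α) ⊆ C) :
    ¬ (C : Finset α) ⊆ A ∪ B := by
  intro h
  have hCS : (C : Finset α) = S := by
    rw [← inter_eq_left.2 h, inter_union_distrib_left, inter_eq_of_ne hAC.symm hC hA,
      inter_eq_of_ne hBC.symm hC hB, union_self]
  have hcard := congrArg card hCS
  rw [card_eq C, card_eq S] at hcard
  omega

theorem exists_ne_superset [Fintype α] (S : powersetCard α j) (hj : j + 2 ≤ Fintype.card α) :
    ∃ A B : powersetCard α (j + 1), A ≠ B ∧ (S : Finset α) ⊆ A ∧ (S : Finset α) ⊆ B := by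
  classical
  have hcard : 1 < #(S : Finset α)ᶜ := by rw [card_compl, card_eq S]; omega
  obtain ⟨a, ha, b, hb, hab⟩ := one_lt_card.1 hcard
  rw [mem_compl] at ha hb
  refine ⟨⟨insert a S, ?_⟩, ⟨insert b S, ?_⟩, fun h ↦ hab ?_, subset_insert _ _, subset_insert _ _⟩
  · rw [mem_iff, card_insert_of_notMem ha, card_eq S]
  · rw [mem_iff, card_insert_of_notMem hb, card_eq S]
  · exact (insert_inj ha).1 (Subtype.ext_iff.1 h)

theorem eq_of_forall_superset [Fintype α] {S T : powersetCard α j} (hj : j + 2 ≤ Fintype.card α)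
    (h : ∀ A : powersetCard α (j + 1), (S : Finset α) ⊆ A → (T : Finset α) ⊆ A) : T = S := by
  classical
  obtain ⟨A, B, hAB, hA, hB⟩ := exists_ne_superset S hj
  rw [eq_iff_subset, ← inter_eq_of_ne hAB hA hB]
  exact subset_inter (h A hA) (h B hB)

namespace InclusionCompatible

theorem map_eq_inter [DecidableEq α] {f : Perm (powersetCard α k)}
    {g : Perm (powersetCard α (k + 1))} (h : InclusionCompatible f g) {A : powersetCard α k}
    {U V : powersetCard α (k + 1)}
    (hUV : U ≠ V) (hU : (A : Finset α) ⊆ U) (hV : (A : Finset α) ⊆ V) :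
    (f A : Finset α) = (g U : Finset α) ∩ g V :=
  (inter_eq_of_ne (g.injective.ne hUV) ((h A U).2 hU) ((h A V).2 hV)).symm

variable {f : Perm (powersetCard α (j + 1))} {g : Perm (powersetCard α (j + 2))}

-- With `U = A ∪ B`, `V = A ∪ C` and `W = B ∪ C`, both sides are computed from `g U`, `g V`, `g W`:
-- `f A ∩ f B = g U ∩ g V ∩ g W` while `f C = g V ∩ g W`.
theorem map_inter_map_subset [DecidableEq α] (h : InclusionCompatible f g) {S : powersetCard α j}
    {A B C : powersetCard α (j + 1)} (hAB : A ≠ B) (hAC : A ≠ C) (hBC : B ≠ C)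
    (hA : (S : Finset α) ⊆ A) (hB : (S : Finset α) ⊆ B) (hC : (S : Finset α) ⊆ C) :
    (f A ∩ f B : Finset α) ⊆ f C := by
  let U : powersetCard α (j + 2) := ⟨A ∪ B, card_union_of_ne hAB hA hB⟩
  let V : powersetCard α (j + 2) := ⟨A ∪ C, card_union_of_ne hAC hA hC⟩
  let W : powersetCard α (j + 2) := ⟨B ∪ C, card_union_of_ne hBC hB hC⟩
  have hUV : U ≠ V := fun e ↦ not_subset_union_of_ne hAC hBC hA hB hC <|
    subset_union_right.trans (Subtype.ext_iff.1 e).symm.subset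
  have hUW : U ≠ W := fun e ↦ not_subset_union_of_ne hAC hBC hA hB hC <|
    subset_union_right.trans (Subtype.ext_iff.1 e).symm.subset
  have hVW : V ≠ W := fun e ↦ not_subset_union_of_ne hAB hBC.symm hA hC hB <|
    subset_union_left.trans (Subtype.ext_iff.1 e).symm.subset
  rw [h.map_eq_inter hUV subset_union_left subset_union_left,
    h.map_eq_inter hUW subset_union_right subset_union_left,
    h.map_eq_inter hVW subset_union_right subset_union_right]
  exact inter_subset_inter inter_subset_right inter_subset_right

theorem exists_subset_map [Fintype α] (h : InclusionCompatible f g)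
    (hj : j + 2 ≤ Fintype.card α) (S : powersetCard α j) :
    ∃ T : powersetCard α j, ∀ A : powersetCard α (j + 1),
      (S : Finset α) ⊆ A → (T : Finset α) ⊆ f A := by
  classical
  obtain ⟨A, B, hAB, hA, hB⟩ := exists_ne_superset S hj
  let U : powersetCard α (j + 2) := ⟨A ∪ B, card_union_of_ne hAB hA hB⟩
  have hcard : #(f A ∩ f B : Finset α) = j := card_inter_of_ne (f.injective.ne hAB)
    ((h A U).2 subset_union_left) ((h B U).2 subset_union_right)
  refine ⟨⟨f A ∩ f B, hcard⟩, fun C hC ↦ ?_⟩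
  obtain rfl | hAC := eq_or_ne A C
  · exact inter_subset_left
  obtain rfl | hBC := eq_or_ne B C
  · exact inter_subset_right
  exact h.map_inter_map_subset hAB hAC hBC hA hB hC

theorem exists_lower [Fintype α] (h : InclusionCompatible f g) (hj : j + 2 ≤ Fintype.card α) :
    ∃ e : Perm (powersetCard α j), InclusionCompatible e f := by
  choose p hp using h.exists_subset_map hj
  choose q hq using h.symm.exists_subset_map hj
  have hqp (S : powersetCard α j) : q (p S) = S := eq_of_forall_superset hj fun A hA ↦ by
    simpa only [Equiv.symm_apply_apply] using hq (p S) (f A) (hp S A hA)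
  have hpq (S : powersetCard α j) : p (q S) = S := eq_of_forall_superset hj fun A hA ↦ by
    simpa only [Equiv.apply_symm_apply] using hp (q S) (f.symm A) (hq S A hA)
  refine ⟨⟨p, q, hqp, hpq⟩, fun S A ↦ ⟨fun hS ↦ ?_, hp S A⟩⟩
  simpa only [hqp, Equiv.symm_apply_apply] using hq (p S) (f A) hS

theorem eq_smul_of_lower [DecidableEq α] {e : Perm (powersetCard α j)} {f : Perm (powersetCard α k)}
    (h : InclusionCompatible e f) (hj : j ≠ 0) (hjk : j ≤ k) {σ : Perm α}
    (hσ : ∀ S, e S = σ • S) (A : powersetCard α k) : f A = σ • A := by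
  symm
  rw [eq_iff_subset, Set.powersetCard.coe_smul, smul_finset_subset_iff]
  refine subset_of_forall_powersetCard_subset hj (hjk.trans_eq (card_eq A).symm) fun S hS ↦ ?_
  rw [← smul_finset_subset_iff, ← Set.powersetCard.coe_smul, ← hσ]
  exact (h S A).2 hS

end InclusionCompatible

theorem exists_perm_eq_smul_of_powersetCard_one [DecidableEq α] (f : Perm (powersetCard α 1)) :
    ∃ σ : Perm α, ∀ A, f A = σ • A := by
  let i : α ≃ powersetCard α 1 := Set.powersetCard.ofSingleton
  refine ⟨(i.trans f).trans i.symm, fun A ↦ ?_⟩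
  obtain ⟨x, rfl⟩ := i.surjective A
  exact (i.apply_symm_apply _).symm

theorem InclusionCompatible.exists_perm_eq_smul [Fintype α] [DecidableEq α] :
    ∀ {j : ℕ} {f : Perm (powersetCard α (j + 1))} {g : Perm (powersetCard α (j + 2))},
      InclusionCompatible f g → j + 2 ≤ Fintype.card α → ∃ σ : Perm α, ∀ A, f A = σ • A
  | 0, f, _, _, _ => exists_perm_eq_smul_of_powersetCard_one f
  | j + 1, _, _, h, hj => by
    obtain ⟨e, he⟩ := h.exists_lower hj
    obtain ⟨σ, hσ⟩ := he.exists_perm_eq_smul (by omega)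
    exact ⟨σ, he.eq_smul_of_lower j.succ_ne_zero (Nat.le_succ _) hσ⟩

theorem exists_perm_eq_smul_of_disjoint_iff [Fintype α] [DecidableEq α]
    (f : Perm (powersetCard α k))
    (hf : ∀ A B, Disjoint (f A : Finset α) (f B) ↔ Disjoint (A : Finset α) B)
    (hk : k ≠ 0) (hkα : 2 * k < Fintype.card α) : ∃ σ : Perm α, ∀ A, f A = σ • A := by
  obtain ⟨j, rfl⟩ := Nat.exists_eq_succ_of_ne_zero hk
  obtain ⟨g, hg⟩ := exists_inclusionCompatible_of_disjoint_iff (m := j + 2) f hf hk (by omega)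
    (by omega)
  exact hg.exists_perm_eq_smul (by omega)

end InclusionCompatible

section Involution

open Finset
open Equiv (Perm)
open scoped Pointwise

variable {α : Type*} [Fintype α] [DecidableEq α] {σ : Perm α}

theorem involutive_of_forall_smul_smul_eq {k : ℕ} (hk : k ≠ 0) (hkα : k < Fintype.card α)
    (h : ∀ A : Set.powersetCard α k, σ • σ • A = A) : Function.Involutive σ := by
  have : FaithfulSMul (Perm α) (Set.powersetCard α k) :=
    Set.powersetCard.faithfulSMul (Nat.one_le_iff_ne_zero.2 hk) (by simpa using hkα)
  have hσσ : σ * σ = 1 := eq_of_smul_eq_smul fun A : Set.powersetCard α k ↦ by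
    rw [mul_smul, h, one_smul]
  exact Perm.ext_iff.1 hσσ

theorem exists_disjoint_smul_eq_of_card_add_two_le (hσ : Function.Involutive σ) {A : Finset α}
    (hA : σ • A = A) (hcard : #A + 2 ≤ Fintype.card α) :
    ∃ B : Finset α, Disjoint A B ∧ #B = 2 ∧ σ • B = B := by
  by_cases hfix : ∀ a ∉ A, σ a = a
  · obtain ⟨B, hBA, hB⟩ := exists_subset_card_eq (s := Aᶜ) (n := 2) (by rw [card_compl]; omega)
    refine ⟨B, subset_compl_iff_disjoint_left.1 hBA, hB, ?_⟩
    exact (image_congr fun b hb ↦ hfix b (mem_compl.1 (hBA hb))).trans image_id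
  · push Not at hfix
    obtain ⟨a, ha, hσa⟩ := hfix
    have hσaA : σ a ∉ A := by rwa [← hA, ← Perm.smul_def, smul_mem_smul_finset_iff]
    refine ⟨{a, σ a}, ?_, card_pair hσa.symm, ?_⟩
    · rw [disjoint_insert_right, disjoint_singleton_right]
      exact ⟨ha, hσaA⟩
    · rw [smul_finset_insert, smul_finset_singleton, Perm.smul_def, Perm.smul_def, hσ a, pair_comm]

theorem exists_smul_eq_card_eq_two_mul (hσ : Function.Involutive σ) :
    ∀ m : ℕ, 2 * m ≤ Fintype.card α → ∃ A : Finset α, #A = 2 * m ∧ σ • A = A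
  | 0, _ => ⟨∅, card_empty, smul_finset_empty σ⟩
  | m + 1, hm => by
    obtain ⟨A, hA, hσA⟩ := exists_smul_eq_card_eq_two_mul hσ m (by omega)
    obtain ⟨B, hAB, hB, hσB⟩ := exists_disjoint_smul_eq_of_card_add_two_le hσ hσA (by omega)
    exact ⟨A ∪ B, by rw [card_union_of_disjoint hAB]; omega, by rw [smul_finset_union, hσA, hσB]⟩

theorem exists_smul_eq_card_eq_of_odd (hσ : Function.Involutive σ) (hα : Odd (Fintype.card α))
    {k : ℕ} (hk : k ≤ Fintype.card α) : ∃ A : Finset α, #A = k ∧ σ • A = A := by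
  obtain ⟨m, rfl | rfl⟩ := k.even_or_odd'
  · exact exists_smul_eq_card_eq_two_mul hσ m hk
  · obtain ⟨l, hl⟩ := hα
    obtain ⟨A, hA, hσA⟩ := exists_smul_eq_card_eq_two_mul hσ (l - m) (by omega)
    refine ⟨Aᶜ, by rw [card_compl, hA]; omega, ?_⟩
    rw [compl_eq_univ_sdiff, smul_finset_sdiff, smul_finset_univ, hσA]

end Involution

theorem IsCayleyGraph.exists_orderOf_eq_prime {V : Type*} [Finite V] [Nonempty V]
    {G : SimpleGraph V} (hG : IsCayleyGraph G) {p : ℕ} [Fact p.Prime] (hp : p ∣ Nat.card V) :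
    ∃ φ : G ≃g G, orderOf φ = p ∧ ∀ v, φ v ≠ v := by
  obtain ⟨H, hH⟩ := hG
  obtain ⟨v₀⟩ := ‹Nonempty V›
  let orbitEquiv : H ≃ V := .ofBijective (fun h ↦ (h : G ≃g G) v₀)
    ⟨fun g h hgh ↦ (hH v₀ _).unique hgh rfl, fun w ↦ (hH v₀ w).exists⟩
  have : Finite H := .of_equiv V orbitEquiv.symm
  obtain ⟨h, hh⟩ := exists_prime_orderOf_dvd_card' p (hp.trans (Nat.card_congr orbitEquiv).symm.dvd)
  refine ⟨h, (Subgroup.orderOf_coe h).trans hh, fun v hv ↦ ?_⟩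
  have h1 : h = 1 := (hH v v).unique hv rfl
  rw [h1, orderOf_one] at hh
  exact (Fact.out : p.Prime).one_lt.ne hh

section Kneser

open Equiv (Perm)
open scoped Pointwise

variable {n k : ℕ}

theorem kneserGraph_adj (hk : k ≠ 0) {A B : {s : Finset (Fin n) // s.card = k}} :
    (kneserGraph n k).Adj A B ↔ Disjoint A.val B.val := by
  rw [kneserGraph, SimpleGraph.fromRel_adj, disjoint_comm (a := B.val), or_self,
    and_iff_right_iff_imp]
  rintro h rfl
  apply hk
  rw [← A.2, disjoint_self.1 h, Finset.bot_eq_empty, Finset.card_empty]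

theorem exists_perm_of_kneserGraph_iso (hk : k ≠ 0) (hkn : 2 * k < n)
    (φ : kneserGraph n k ≃g kneserGraph n k) :
    ∃ σ : Perm (Fin n), ∀ A, (φ A).val = σ • A.val := by
  have hdisj (A B : {s : Finset (Fin n) // s.card = k}) :
      Disjoint (φ A).val (φ B).val ↔ Disjoint A.val B.val := by
    rw [← kneserGraph_adj hk, ← kneserGraph_adj hk, φ.map_adj_iff]
  obtain ⟨σ, hσ⟩ := exists_perm_eq_smul_of_disjoint_iff (α := Fin n) (k := k) φ.toEquiv hdisj hk
    (by rwa [Fintype.card_fin])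
  exact ⟨σ, fun A ↦ Subtype.ext_iff.1 (hσ A)⟩

end Kneser

theorem kneser_not_cayley_of_odd (n k : ℕ) (hn : 4 < n) (hodd : Odd n)
    (hk : 2 ≤ k) (hkn : 2 * k < n) (heven : Even (n.choose k)) :
    ¬ IsCayleyGraph (kneserGraph n k) := by
  intro hCayley
  have hk0 : k ≠ 0 := by omega
  have hcard : Nat.card {s : Finset (Fin n) // s.card = k} = n.choose k := by
    rw [Nat.card_eq_fintype_card, Fintype.card_finset_len, Fintype.card_fin]
  have : Nonempty {s : Finset (Fin n) // s.card = k} :=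
    (Nat.card_pos_iff.1 (hcard ▸ Nat.choose_pos (by omega))).1
  obtain ⟨φ, hφ, hfree⟩ := hCayley.exists_orderOf_eq_prime (p := 2) (hcard ▸ heven.two_dvd)
  obtain ⟨σ, hσ⟩ := exists_perm_of_kneserGraph_iso hk0 hkn φ
  have hφφ : φ * φ = 1 := by rw [← pow_two, ← hφ, pow_orderOf_eq_one]
  have hσσ : Function.Involutive σ :=
    involutive_of_forall_smul_smul_eq hk0 (by rw [Fintype.card_fin]; omega) fun A ↦ by
      apply Subtype.ext
      rw [Set.powersetCard.coe_smul, Set.powersetCard.coe_smul, ← hσ A, ← hσ (φ A)]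
      exact congrArg Subtype.val (DFunLike.congr_fun hφφ A)
  obtain ⟨A, hA, hσA⟩ := exists_smul_eq_card_eq_of_odd hσσ (k := k)
    (by rwa [Fintype.card_fin]) (by rw [Fintype.card_fin]; omega)
  exact hfree ⟨A, hA⟩ (Subtype.ext ((hσ _).trans hσA))
end

section
/- Let n > 4 and 2 ≤ k < n/2 with k even (n may be odd or even). If θ is a permutation of [n] = {1,2,...,n} with θ² = id, then there exist two k-element subsets v and w of [n] such that v ∩ w = ∅, θ(v) = v, and θ(w) = w. -/
/-!
An involution has orbits of size one or two, so every invariant set with at least two points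
contains an invariant pair: a two-element orbit if there is one, and any two fixed points
otherwise. Removing invariant pairs one at a time yields invariant subsets of every even
cardinality that fits; the second `k`-element set is then found in the complement of the first.
-/

section

variable {α : Type*} {f : α → α} {S : Set α}

theorem image_sdiff_eq_self_of_injective (hf : Function.Injective f) (hS : f '' S = S)
    {T : Set α} (hT : f '' T = T) : f '' (S \ T) = S \ T := by
  rw [Set.image_sdiff hf, hS, hT]

theorem le_encard_sdiff_of_add_encard_le {T : Set α} (hT : T.Finite) {m : ℕ∞}
    (h : m + T.encard ≤ S.encard) : m ≤ (S \ T).encard :=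
  calc
    m ≤ S.encard - T.encard := ENat.le_sub_of_add_le_right hT.encard_lt_top.ne h
    _ ≤ (S \ T).encard := Set.tsub_encard_le_encard_sdiff S T

variable [DecidableEq α]

theorem exists_invariant_pair_of_involutive (hf : Function.Involutive f) (hS : f '' S = S)
    (hnontriv : S.Nontrivial) :
    ∃ P : Finset α, ↑P ⊆ S ∧ P.card = 2 ∧ P.image f = P := by
  by_cases hmoved : ∃ x ∈ S, f x ≠ x
  · obtain ⟨x, hx, hne⟩ := hmoved
    have hfx : f x ∈ S := hS ▸ Set.mem_image_of_mem f hx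
    exact ⟨{x, f x}, by simp [Set.pair_subset hx hfx], Finset.card_pair hne.symm,
      by simp [Finset.image_insert, hf x, Finset.pair_comm]⟩
  · have hfix : ∀ x ∈ S, f x = x := by simpa using hmoved
    obtain ⟨x, hx, y, hy, hxy⟩ := hnontriv
    exact ⟨{x, y}, by simp [Set.pair_subset hx hy], Finset.card_pair hxy,
      by simp [Finset.image_insert, hfix x hx, hfix y hy]⟩

theorem exists_invariant_subset_card_eq_of_even (hf : Function.Involutive f) (hS : f '' S = S)
    {k : ℕ} (hk : Even k) (hcard : k ≤ S.encard) :
    ∃ T : Finset α, ↑T ⊆ S ∧ T.card = k ∧ T.image f = T := by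
  obtain ⟨j, rfl⟩ := hk.two_dvd
  clear hk
  induction j generalizing S with
  | zero => exact ⟨∅, by simp⟩
  | succ j ih =>
    have hcard' : ((2 * j : ℕ) : ℕ∞) + 2 ≤ S.encard := by simpa [mul_add] using hcard
    have hnontriv : S.Nontrivial := by
      rw [← Set.one_lt_encard_iff_nontrivial]
      exact Nat.one_lt_ofNat.trans_le (le_add_self.trans hcard')
    obtain ⟨P, hPS, hPcard, hPinv⟩ := exists_invariant_pair_of_involutive hf hS hnontriv
    obtain ⟨T, hTS, hTcard, hTinv⟩ :=
      ih (image_sdiff_eq_self_of_injective hf.injective hS (mod_cast hPinv))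
        (le_encard_sdiff_of_add_encard_le P.finite_toSet (by simpa [hPcard] using hcard'))
    have hdisj : Disjoint T P := by
      simpa using (Set.subset_sdiff.mp hTS).2
    refine ⟨T ∪ P, ?_, ?_, ?_⟩
    · simpa using ⟨hTS.trans Set.sdiff_subset, hPS⟩
    · rw [Finset.card_union_of_disjoint hdisj, hTcard, hPcard, mul_add_one]
    · rw [Finset.image_union, hTinv, hPinv]

theorem exists_two_disjoint_fixed_k_subsets_general (hf : Function.Involutive f) {k : ℕ}
    (hk : Even k) (hcard : (2 * k : ℕ) ≤ ENat.card α) :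
    ∃ v w : Finset α, v.card = k ∧ w.card = k ∧ v ∩ w = ∅ ∧ v.image f = v ∧ w.image f = w := by
  have huniv : f '' Set.univ = Set.univ := Set.image_univ_of_surjective hf.surjective
  have hadd : (k + k : ℕ∞) ≤ (Set.univ : Set α).encard := by
    simpa [two_mul, Set.encard_univ] using hcard
  obtain ⟨v, -, hvcard, hvinv⟩ :=
    exists_invariant_subset_card_eq_of_even hf huniv hk (le_self_add.trans hadd)
  obtain ⟨w, hwv, hwcard, hwinv⟩ :=
    exists_invariant_subset_card_eq_of_even hf
      (image_sdiff_eq_self_of_injective hf.injective huniv (mod_cast hvinv)) hk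
      (le_encard_sdiff_of_add_encard_le v.finite_toSet (by simpa [hvcard] using hadd))
  have hdisj : Disjoint v w := by
    simpa using (Set.subset_sdiff.mp hwv).2.symm
  exact ⟨v, w, hvcard, hwcard, Finset.disjoint_iff_inter_eq_empty.mp hdisj, hvinv, hwinv⟩

end

theorem exists_two_disjoint_fixed_k_subsets (n k : ℕ) (hn : 4 < n) (hkeven : Even k)
    (hk : 2 ≤ k) (hkn : 2 * k < n) (θ : Equiv.Perm (Fin n)) (hθ : θ ^ 2 = 1) :
    ∃ v w : Finset (Fin n), v.card = k ∧ w.card = k ∧ v ∩ w = ∅ ∧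
      v.image θ = v ∧ w.image θ = w :=
  exists_two_disjoint_fixed_k_subsets_general
    (fun x ↦ by simpa [sq] using DFunLike.congr_fun hθ x) hkeven
    (by simpa using mod_cast hkn.le)
end

section
/- Let k > 1 be an integer such that k is not of the form 2^t − 1 for any integer t ≥ 2. Then the odd graph O_{k+1} = K(2k+1, k) is not a Cayley graph; that is, no subgroup of the automorphism group of O_{k+1} acts regularly (freely and transitively) on its vertex set. -/
/-!
Label each edge `AB` of the odd graph by the unique point lying in neither `A` nor `B`. In a
hexagon, opposite edges carry the same label, and any two edges with a common label are linked by
a chain of hexagons, so every automorphism permutes the labels. An involutive automorphism thus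
induces an involution `σ` of the `2k + 1` points. As `2k + 1` is odd, one of `k`, `k + 1` is even,
so gathering points in pairs gives a `σ`-invariant `k`-set, and this vertex is fixed.

By Lucas' theorem the number of vertices `(2k + 1).choose k` is even unless `k + 1` is a power of
two. When it is even, Cauchy's theorem puts an involution into any regular group of automorphisms,
and a non-trivial element of such a group fixes no vertex.
-/

theorem even_choose_two_mul_add_one {k : ℕ} (hk : ∀ t, k + 1 ≠ 2 ^ t) :
    Even ((2 * k + 1).choose k) := by
  induction k using Nat.strong_induction_on with
  | _ k ih =>
    have lucas : (2 * k + 1).choose k ≡ k.choose (k / 2) [MOD 2] := by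
      have := Choose.choose_modEq_choose_mod_mul_choose_div_nat (n := 2 * k + 1) (k := k) (p := 2)
      rw [show (2 * k + 1) % 2 = 1 by omega, show (2 * k + 1) / 2 = k by omega] at this
      rcases Nat.mod_two_eq_zero_or_one k with h | h <;> simpa [h] using this
    suffices h : Even (k.choose (k / 2)) from Nat.even_iff.2 (Eq.trans lucas (Nat.even_iff.1 h))
    obtain ⟨j, rfl | rfl⟩ := Nat.even_or_odd' k
    · have hj : j ≠ 0 := by
        rintro rfl
        exact hk 0 rfl
      rw [Nat.mul_div_cancel_left j two_pos]
      exact even_iff_two_dvd.2 (Nat.two_dvd_centralBinom_of_one_le (Nat.one_le_iff_ne_zero.2 hj))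
    · rw [show (2 * j + 1) / 2 = j by omega]
      refine ih j (by omega) fun t ht ↦ hk (t + 1) ?_
      rw [pow_succ, ← ht]
      ring

namespace IsCayleyGraph

theorem exists_involutive_iso_forall_ne {V : Type*} [Finite V] {G : SimpleGraph V}
    (hG : IsCayleyGraph G) (hV : Even (Nat.card V)) :
    ∃ φ : G ≃g G, Function.Involutive φ ∧ ∀ v, φ v ≠ v := by
  obtain ⟨H, hH⟩ := hG
  rcases isEmpty_or_nonempty V with _ | ⟨⟨v₀⟩⟩
  · exact ⟨.refl, isEmptyElim, isEmptyElim⟩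
  have orbit_bijective : Function.Bijective fun g : H ↦ (g : G ≃g G) v₀ :=
    ⟨fun g g' h ↦ (hH v₀ _).unique h rfl, fun w ↦ (hH v₀ w).exists⟩
  have : Finite H := .of_injective _ orbit_bijective.injective
  rw [← Nat.card_eq_of_bijective _ orbit_bijective] at hV
  obtain ⟨g, hg⟩ := exists_prime_orderOf_dvd_card' 2 (even_iff_two_dvd.1 hV)
  obtain ⟨hg_sq, hg_ne⟩ := orderOf_eq_prime_iff.1 hg
  refine ⟨g, fun v ↦ ?_, fun v hv ↦ hg_ne ((hH v v).unique hv rfl)⟩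
  rw [pow_two] at hg_sq
  exact congrArg (fun f : H ↦ (f : G ≃g G) v) hg_sq

end IsCayleyGraph

section Involutive

variable {α : Type*}

theorem mapsTo_compl_of_involutive {f : α → α} (hf : f.Involutive) {s : Set α}
    (hs : s.MapsTo f s) : sᶜ.MapsTo f sᶜ :=
  fun x hx hfx ↦ hx (hf x ▸ hs hfx)

theorem exists_mapsTo_pair {f : α → α} (hf : f.Involutive) {s : Finset α}
    (hs : Set.MapsTo f s s) (hcard : 2 ≤ s.card) :
    ∃ t ⊆ s, t.card = 2 ∧ Set.MapsTo f t t := by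
  classical
  by_cases! hfix : ∀ x ∈ s, f x = x
  · obtain ⟨t, hts, ht⟩ := Finset.exists_subset_card_eq hcard
    exact ⟨t, hts, ht, fun x hx ↦ by rwa [hfix x (hts hx)]⟩
  · obtain ⟨x, hx, hfx⟩ := hfix
    refine ⟨{x, f x}, ?_, Finset.card_pair hfx.symm, ?_⟩
    · simpa [Finset.insert_subset_iff, hx] using hs hx
    · simp [Set.MapsTo, hf x]

variable [Fintype α]

theorem exists_mapsTo_card_eq_two_mul {f : α → α} (hf : f.Involutive) {m : ℕ}
    (hm : 2 * m ≤ Fintype.card α) :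
    ∃ t : Finset α, t.card = 2 * m ∧ Set.MapsTo f t t := by
  classical
  induction m with
  | zero => exact ⟨∅, by simp⟩
  | succ m ih =>
    obtain ⟨t, ht, htf⟩ := ih (by omega)
    obtain ⟨u, hut, hu, huf⟩ := exists_mapsTo_pair hf (s := tᶜ)
      (by simpa using mapsTo_compl_of_involutive hf htf) (by rw [Finset.card_compl]; omega)
    refine ⟨t ∪ u, ?_, by simpa using htf.union_union huf⟩
    rw [Finset.card_union_of_disjoint (disjoint_compl_right.mono_right hut), ht, hu, mul_add_one]

theorem exists_mapsTo_card_eq {f : α → α} (hf : f.Involutive) (hα : Odd (Fintype.card α)) {m : ℕ}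
    (hm : m ≤ Fintype.card α) :
    ∃ t : Finset α, t.card = m ∧ Set.MapsTo f t t := by
  classical
  obtain ⟨j, rfl | rfl⟩ := Nat.even_or_odd' m
  · exact exists_mapsTo_card_eq_two_mul hf hm
  · obtain ⟨i, hi⟩ := hα
    obtain ⟨t, ht, htf⟩ := exists_mapsTo_card_eq_two_mul hf (m := i - j) (by omega)
    refine ⟨tᶜ, ?_, by simpa using mapsTo_compl_of_involutive hf htf⟩
    rw [Finset.card_compl]
    omega

end Involutive

theorem exchange_induction {α : Type*} [DecidableEq α] {k : ℕ}
    {p : {s : Finset α // s.card = k} → Prop} {s t : {s : Finset α // s.card = k}} (hs : p s)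
    (swap : ∀ u v : {s : Finset α // s.card = k}, p u → ∀ a ∈ u.1 \ t.1, ∀ b ∈ t.1 \ u.1,
      v.1 = insert b (u.1.erase a) → p v) : p t := by
  induction h : (s.1 \ t.1).card generalizing s with
  | zero =>
    have hst : s.1 ⊆ t.1 := by simpa using h
    rwa [← Subtype.ext (Finset.eq_of_subset_of_card_le hst (by rw [s.2, t.2]))]
  | succ m ih =>
    have hcard : (s.1 \ t.1).card = (t.1 \ s.1).card :=
      Finset.card_sdiff_comm (s.2.trans t.2.symm)
    obtain ⟨a, ha⟩ := Finset.card_pos.1 (by omega : 0 < (s.1 \ t.1).card)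
    obtain ⟨b, hb⟩ := Finset.card_pos.1 (by omega : 0 < (t.1 \ s.1).card)
    have has : a ∈ s.1 := (Finset.mem_sdiff.1 ha).1
    have ⟨hbt, hbs⟩ := Finset.mem_sdiff.1 hb
    let v : {s : Finset α // s.card = k} := ⟨insert b (s.1.erase a), by
      rw [Finset.card_insert_of_notMem (by simp [hbs]), Finset.card_erase_add_one has, s.2]⟩
    have hv : v.1 \ t.1 = (s.1 \ t.1).erase a := by
      rw [Finset.insert_sdiff_of_mem _ hbt, Finset.erase_sdiff_comm]
    exact ih (swap s v hs a ha b hb rfl) (by rw [hv, Finset.card_erase_of_mem ha, h]; rfl)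

namespace kneserGraph

variable {n k : ℕ} {A B : {s : Finset (Fin n) // s.card = k}}

theorem disjoint_of_adj (h : (kneserGraph n k).Adj A B) : Disjoint A.1 B.1 :=
  h.2.elim id fun h' ↦ h'.symm

theorem adj_iff_disjoint [NeZero k] : (kneserGraph n k).Adj A B ↔ Disjoint A.1 B.1 := by
  refine ⟨disjoint_of_adj, fun h ↦ ⟨?_, .inl h⟩⟩
  rintro rfl
  exact NeZero.ne k (by simpa [disjoint_self.1 h] using A.2.symm)

end kneserGraph

/-- The odd graph `O_{k+1}`. -/
abbrev oddGraph (k : ℕ) : SimpleGraph {s : Finset (Fin (2 * k + 1)) // s.card = k} :=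
  kneserGraph (2 * k + 1) k

namespace oddGraph

variable {k : ℕ}

theorem exists_notMem (x : Fin (2 * k + 1)) :
    ∃ A : {s : Finset (Fin (2 * k + 1)) // s.card = k}, x ∉ A.1 := by
  obtain ⟨s, hs, hcard⟩ := Finset.exists_subset_card_eq (s := {x}ᶜ) (n := k)
    (by rw [Finset.card_compl, Fintype.card_fin, Finset.card_singleton]; omega)
  exact ⟨⟨s, hcard⟩, fun hx ↦ by simpa using hs hx⟩

/-- `IsEdgeLabel x A B` says that `AB` is an edge of the odd graph whose label, the unique point
outside `A ∪ B`, is `x`. It is a relation, so that no label has to be chosen for non-edges. -/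
structure IsEdgeLabel (x : Fin (2 * k + 1)) (A B : {s : Finset (Fin (2 * k + 1)) // s.card = k}) :
    Prop where
  adj : (oddGraph k).Adj A B
  notMem_left : x ∉ A.1
  notMem_right : x ∉ B.1

variable {x y : Fin (2 * k + 1)} {A B C D A' B' : {s : Finset (Fin (2 * k + 1)) // s.card = k}}

namespace IsEdgeLabel

theorem symm (h : IsEdgeLabel x A B) : IsEdgeLabel x B A :=
  ⟨h.adj.symm, h.notMem_right, h.notMem_left⟩

theorem right_eq_compl (h : IsEdgeLabel x A B) : B.1 = (insert x A.1)ᶜ := by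
  refine Finset.eq_of_subset_of_card_le ?_ ?_
  · rw [Finset.subset_compl_iff_disjoint_right, Finset.disjoint_insert_right]
    exact ⟨h.notMem_right, (kneserGraph.disjoint_of_adj h.adj).symm⟩
  · rw [Finset.card_compl, Finset.card_insert_of_notMem h.notMem_left, A.2, B.2, Fintype.card_fin]
    omega

theorem mem_right_iff (h : IsEdgeLabel x A B) {z : Fin (2 * k + 1)} :
    z ∈ B.1 ↔ z ≠ x ∧ z ∉ A.1 := by
  simp [h.right_eq_compl]

theorem right_unique (h : IsEdgeLabel x A B) (h' : IsEdgeLabel x A C) : B = C :=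
  Subtype.ext (h.right_eq_compl.trans h'.right_eq_compl.symm)

theorem unique (h : IsEdgeLabel x A B) (h' : IsEdgeLabel y A B) : x = y := by
  by_contra hxy
  exact h'.notMem_right (h.mem_right_iff.2 ⟨Ne.symm hxy, h'.notMem_left⟩)

theorem mem_of_adj (h : IsEdgeLabel x A B) (hBC : (oddGraph k).Adj B C) (hCA : C ≠ A) :
    x ∈ C.1 := by
  by_contra hx
  exact hCA (right_unique ⟨hBC, h.notMem_right, hx⟩ h.symm)

theorem opposite_of_hexagon (h : IsEdgeLabel x A B) (hBC : (oddGraph k).Adj B C)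
    (hCB' : (oddGraph k).Adj C B') (hBA' : (oddGraph k).Adj B' A') (hA'D : (oddGraph k).Adj A' D)
    (hDA : (oddGraph k).Adj D A) (hCA : C ≠ A) (hDB : D ≠ B) : IsEdgeLabel x A' B' where
  adj := hBA'.symm
  notMem_left := Finset.disjoint_right.1 (kneserGraph.disjoint_of_adj hA'D)
    (h.symm.mem_of_adj hDA.symm hDB)
  notMem_right := Finset.disjoint_left.1 (kneserGraph.disjoint_of_adj hCB')
    (h.mem_of_adj hBC hCA)

end IsEdgeLabel

theorem exists_isEdgeLabel_of_adj (h : (oddGraph k).Adj A B) : ∃ x, IsEdgeLabel x A B := by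
  have hcard : (A.1 ∪ B.1).card < Fintype.card (Fin (2 * k + 1)) := by
    rw [Finset.card_union_of_disjoint (kneserGraph.disjoint_of_adj h), A.2, B.2, Fintype.card_fin]
    omega
  obtain ⟨x, hx⟩ := Finset.exists_mem_notMem_of_card_lt_card (t := Finset.univ) hcard
  rw [Finset.mem_union, not_or] at hx
  exact ⟨x, h, hx.2.1, hx.2.2⟩

variable [NeZero k]

theorem exists_isEdgeLabel_of_notMem (hx : x ∉ A.1) : ∃ B, IsEdgeLabel x A B := by
  have hcard : (insert x A.1)ᶜ.card = k := by
    rw [Finset.card_compl, Finset.card_insert_of_notMem hx, A.2, Fintype.card_fin]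
    omega
  refine ⟨⟨(insert x A.1)ᶜ, hcard⟩, kneserGraph.adj_iff_disjoint.2 ?_, hx, by simp⟩
  exact disjoint_compl_right.mono_left (Finset.subset_insert x A.1)

theorem exists_isEdgeLabel (x : Fin (2 * k + 1)) :
    ∃ A B : {s : Finset (Fin (2 * k + 1)) // s.card = k}, IsEdgeLabel x A B := by
  obtain ⟨A, hA⟩ := exists_notMem (k := k) x
  exact ⟨A, exists_isEdgeLabel_of_notMem hA⟩

namespace IsEdgeLabel

theorem exists_hexagon_of_swap {a b : Fin (2 * k + 1)} (h : IsEdgeLabel x A B)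
    (h' : IsEdgeLabel x A' B') (ha : a ∈ A.1) (hb : b ∉ A.1)
    (hA' : A'.1 = insert b (A.1.erase a)) :
    ∃ C D, (oddGraph k).Adj B C ∧ (oddGraph k).Adj C B' ∧ (oddGraph k).Adj A' D ∧
      (oddGraph k).Adj D A ∧ C ≠ A ∧ D ≠ B := by
  have hbx : b ≠ x := by
    rintro rfl
    exact h'.notMem_left (by simp [hA'])
  have haB : a ∉ B.1 := fun haB ↦ (h.mem_right_iff.1 haB).2 ha
  -- Around the hexagon `A B C B' A' D` the edge labels are `x, a, b, x, a, b`.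
  obtain ⟨C, hC⟩ := exists_isEdgeLabel_of_notMem haB
  obtain ⟨D, hD⟩ := exists_isEdgeLabel_of_notMem hb
  refine ⟨C, D, hC.adj, ?_, ?_, hD.adj.symm, ?_, ?_⟩
  · rw [kneserGraph.adj_iff_disjoint, Finset.disjoint_left]
    intro z hzC hzB'
    simp only [hC.mem_right_iff, h.mem_right_iff, h'.mem_right_iff, hA', Finset.mem_insert,
      Finset.mem_erase] at hzC hzB'
    tauto
  · rw [kneserGraph.adj_iff_disjoint, Finset.disjoint_left]
    intro z hzA' hzD
    simp only [hD.mem_right_iff, hA', Finset.mem_insert, Finset.mem_erase] at hzA' hzD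
    tauto
  · rintro rfl
    exact hC.notMem_right ha
  · rintro rfl
    exact hD.notMem_right (h.mem_right_iff.2 ⟨hbx, hb⟩)

variable {φ : oddGraph k →g oddGraph k}

theorem map_of_same_label (hφ : Function.Injective φ) (h : IsEdgeLabel x A B)
    (hy : IsEdgeLabel y (φ A) (φ B)) (h' : IsEdgeLabel x A' B') :
    IsEdgeLabel y (φ A') (φ B') := by
  obtain ⟨B₁, hB₁, hyB₁⟩ : ∃ B₁, IsEdgeLabel x A' B₁ ∧ IsEdgeLabel y (φ A') (φ B₁) := by
    refine exchange_induction (p := fun U ↦ ∃ V, IsEdgeLabel x U V ∧ IsEdgeLabel y (φ U) (φ V))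
      ⟨B, h, hy⟩ ?_
    rintro U U' ⟨V, hxV, hyV⟩ a ha b hb hU'
    rw [Finset.mem_sdiff] at ha hb
    have hbx : x ≠ b := fun hxb ↦ h'.notMem_left (hxb ▸ hb.1)
    obtain ⟨V', hV'⟩ := exists_isEdgeLabel_of_notMem (A := U') (x := x)
      (by simp [hU', hbx, hxV.notMem_left])
    obtain ⟨C, D, hVC, hCV', hU'D, hDU, hCU, hDV⟩ := hxV.exists_hexagon_of_swap hV' ha.1 hb.2 hU'
    exact ⟨V', hV', hyV.opposite_of_hexagon (φ.map_adj hVC) (φ.map_adj hCV')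
      (φ.map_adj hV'.adj.symm) (φ.map_adj hU'D) (φ.map_adj hDU) (hφ.ne hCU) (hφ.ne hDV)⟩
  rwa [h'.right_unique hB₁]

end IsEdgeLabel

theorem exists_map_isEdgeLabel {φ : oddGraph k →g oddGraph k} (hφ : Function.Injective φ) :
    ∃ σ : Fin (2 * k + 1) → Fin (2 * k + 1),
      ∀ x A B, IsEdgeLabel x A B → IsEdgeLabel (σ x) (φ A) (φ B) := by
  have key (x : Fin (2 * k + 1)) :
      ∃ y, ∀ A B, IsEdgeLabel x A B → IsEdgeLabel y (φ A) (φ B) := by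
    obtain ⟨A, B, hAB⟩ := exists_isEdgeLabel x
    obtain ⟨y, hy⟩ := exists_isEdgeLabel_of_adj (φ.map_adj hAB.adj)
    exact ⟨y, fun A' B' h' ↦ hAB.map_of_same_label hφ hy h'⟩
  choose σ hσ using key
  exact ⟨σ, hσ⟩

theorem exists_fixed_of_involutive {φ : oddGraph k →g oddGraph k} (hφ : Function.Involutive φ) :
    ∃ A, φ A = A := by
  obtain ⟨σ, hσ⟩ := exists_map_isEdgeLabel hφ.injective
  have hσσ : Function.Involutive σ := fun x ↦ by
    obtain ⟨A, B, h⟩ := exists_isEdgeLabel x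
    have h' := hσ _ _ _ (hσ _ _ _ h)
    rw [hφ, hφ] at h'
    exact h'.unique h
  obtain ⟨t, ht, htσ⟩ := exists_mapsTo_card_eq hσσ (by simp) (m := k) (by simp; omega)
  let T : {s : Finset (Fin (2 * k + 1)) // s.card = k} := ⟨t, ht⟩
  have hφT : (φ T).1 ⊆ T.1 := by
    intro z hz
    by_contra hzT
    obtain ⟨B, hB⟩ := exists_isEdgeLabel_of_notMem (A := T) (x := σ z)
      (mapsTo_compl_of_involutive hσσ htσ hzT)
    have hz' := (hσ _ _ _ hB).notMem_left
    rw [hσσ z] at hz'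
    exact hz' hz
  exact ⟨T, Subtype.ext (Finset.eq_of_subset_of_card_le hφT (by rw [(φ T).2, T.2]))⟩

end oddGraph

theorem odd_graph_not_cayley (k : ℕ) (hk : 1 < k)
    (h : ¬ ∃ t : ℕ, 2 ≤ t ∧ k = 2 ^ t - 1) :
    ¬ IsCayleyGraph (kneserGraph (2 * k + 1) k) := by
  intro hCayley
  have hpow (t : ℕ) : k + 1 ≠ 2 ^ t := fun ht ↦ by
    refine h ⟨t, ?_, by omega⟩
    by_contra! ht2
    interval_cases t <;> omega
  have hcard : Even (Nat.card {s : Finset (Fin (2 * k + 1)) // s.card = k}) := by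
    rw [Nat.card_eq_fintype_card, Fintype.card_finset_len, Fintype.card_fin]
    exact even_choose_two_mul_add_one hpow
  obtain ⟨φ, hφ, hne⟩ := hCayley.exists_involutive_iso_forall_ne hcard
  have : NeZero k := ⟨by omega⟩
  obtain ⟨A, hA⟩ := oddGraph.exists_fixed_of_involutive (φ := φ.toHom) hφ
  exact hne A hA
end

section
/- Let k > 4 be an even integer such that k is not of the form 2^t for any integer t ≥ 2. Then the binomial coefficient C(2k+1, k) is divisible by 4. -/
/-!
Write `s n` for the binary digit sum of `n`. By Kummer's theorem the exponent of `2` in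
`(2 * k + 1).choose k` is `s k + s (k + 1) - s (2 * k + 1)`, and `s (2 * k + 1) = s k + 1`, so this
exponent is `s (k + 1) - 1`. For even `k` it is `s k`, which is at least `2` unless `k` is zero or a
power of two.
-/

section DigitSum

variable {b : ℕ}

lemma sum_digits_add_base_mul (hb : 1 < b) {r : ℕ} (hr : r < b) (m : ℕ) :
    (Nat.digits b (r + b * m)).sum = r + (Nat.digits b m).sum := by
  by_cases hzero : r = 0 ∧ m = 0
  · obtain ⟨rfl, rfl⟩ := hzero
    simp
  · rw [Nat.digits_add b hb r m hr (not_and_or.mp hzero), List.sum_cons]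

lemma sum_digits_eq_zero_iff {n : ℕ} : (Nat.digits b n).sum = 0 ↔ n = 0 := by
  refine ⟨fun hsum => ?_, fun hn => by simp [hn]⟩
  by_contra hn
  have hlast := List.getLast_mem (Nat.digits_ne_nil_iff_ne_zero (b := b).mpr hn)
  exact Nat.getLast_digit_ne_zero b hn (List.sum_eq_zero_iff.mp hsum _ hlast)

lemma sum_digits_base_pow (hb : 1 < b) (t : ℕ) : (Nat.digits b (b ^ t)).sum = 1 := by
  simpa [Nat.digits_of_lt b 1 one_ne_zero hb] using
    congrArg List.sum (Nat.digits_base_pow_mul (k := t) hb one_pos)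

lemma sum_digits_eq_one_iff (hb : 1 < b) {n : ℕ} :
    (Nat.digits b n).sum = 1 ↔ ∃ t, n = b ^ t := by
  refine ⟨fun hsum => ?_, fun ⟨t, ht⟩ => ht ▸ sum_digits_base_pow hb t⟩
  induction n using Nat.strong_induction_on with
  | _ n ih =>
    have hn : n ≠ 0 := by
      rintro rfl
      simp at hsum
    have hsplit : n % b + (Nat.digits b (n / b)).sum = 1 := by
      rw [← sum_digits_add_base_mul hb (Nat.mod_lt n (by lia)), Nat.mod_add_div, hsum]
    rcases Nat.add_eq_one_iff.mp hsplit with ⟨hmod, hdiv⟩ | ⟨hmod, hdiv⟩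
    · obtain ⟨t, ht⟩ := ih (n / b) (Nat.div_lt_self (Nat.pos_of_ne_zero hn) hb) hdiv
      exact ⟨t + 1, by rw [pow_succ', ← ht, Nat.mul_div_cancel' (Nat.dvd_of_mod_eq_zero hmod)]⟩
    · have hquot : n / b = 0 := sum_digits_eq_zero_iff.mp hdiv
      exact ⟨0, by rw [← Nat.mod_add_div n b, hmod, hquot, mul_zero, add_zero, pow_zero]⟩

end DigitSum

lemma padicValNat_two_choose_two_mul_add_one (k : ℕ) :
    padicValNat 2 ((2 * k + 1).choose k) = (Nat.digits 2 (k + 1)).sum - 1 := by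
  have hkummer := sub_one_mul_padicValNat_choose_eq_sub_sum_digits' (p := 2) (k := k) (n := k + 1)
  have hsum : (Nat.digits 2 (1 + 2 * k)).sum = 1 + (Nat.digits 2 k).sum :=
    sum_digits_add_base_mul one_lt_two one_lt_two k
  rw [show k + 1 + k = 1 + 2 * k by ring, hsum] at hkummer
  rw [add_comm (2 * k)]
  lia

lemma padicValNat_two_choose_two_mul_add_one_of_even {k : ℕ} (hk : Even k) :
    padicValNat 2 ((2 * k + 1).choose k) = (Nat.digits 2 k).sum := by
  obtain ⟨m, rfl⟩ := even_iff_exists_two_mul.mp hk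
  have hsum : (Nat.digits 2 (2 * m)).sum = (Nat.digits 2 m).sum := by
    simpa only [zero_add] using sum_digits_add_base_mul one_lt_two two_pos m
  have hsum_succ : (Nat.digits 2 (2 * m + 1)).sum = 1 + (Nat.digits 2 m).sum := by
    rw [add_comm (2 * m), sum_digits_add_base_mul one_lt_two one_lt_two]
  rw [padicValNat_two_choose_two_mul_add_one, hsum_succ, hsum, Nat.add_sub_cancel_left]

lemma two_pow_dvd_choose_two_mul_add_one_iff {k : ℕ} (hk : Even k) (j : ℕ) :
    2 ^ j ∣ (2 * k + 1).choose k ↔ j ≤ (Nat.digits 2 k).sum := by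
  have hchoose : (2 * k + 1).choose k ≠ 0 := (Nat.choose_pos (by lia)).ne'
  rw [padicValNat_dvd_iff_le hchoose, padicValNat_two_choose_two_mul_add_one_of_even hk]

theorem four_dvd_choose (k : ℕ) (hk : 4 < k) (hkeven : Even k)
    (h : ¬ ∃ t : ℕ, 2 ≤ t ∧ k = 2 ^ t) :
    4 ∣ (2 * k + 1).choose k := by
  have hsum_ne_zero : (Nat.digits 2 k).sum ≠ 0 :=
    sum_digits_eq_zero_iff.not.mpr (Nat.ne_zero_of_lt hk)
  have hsum_ne_one : (Nat.digits 2 k).sum ≠ 1 := by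
    intro hsum
    obtain ⟨t, rfl⟩ := (sum_digits_eq_one_iff one_lt_two).mp hsum
    have ht : 2 < t := (Nat.pow_lt_pow_iff_right one_lt_two).mp hk
    exact h ⟨t, ht.le, rfl⟩
  exact (two_pow_dvd_choose_two_mul_add_one_iff hkeven 2).mpr (by lia)
end
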